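/- Let X ∈ ℝ^{n×d} be a matrix every row of which has Euclidean norm at most C_X > 0, and suppose λ_min(XᵀX) ≥ λ̄_min for some λ̄_min ≥ 0. Let k ≥ 1, σ > 0, and set γ := (σ² + λ̄_min)/C_X². Assume γ > 1, and let X' be obtained from X by replacing exactly one row with the zero vector. Then for every α ∈ (1, γ), both D_α(M(X)‖M(X')) ≤ φ(α; k, γ) and D_α(M(X')‖M(X)) ≤ φ(α; k, γ), where M denotes the Gaussian mixing mechanism with parameters k and σ. -/

import Mathlib

open MeasureTheory ProbabilityTheory Matrix

/-- Law of the Gaussian random matrix with i.i.d. standard Gaussian entries. -/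
noncomputable def stdGaussMat (k n : ℕ) : Measure (Fin k → Fin n → ℝ) :=
  Measure.pi fun _ => Measure.pi fun _ => gaussianReal 0 1

/-- The Gaussian mixing mechanism `M(X) = S X + σ ξ` with `S, ξ` independent
matrices of i.i.d. standard Gaussian entries: this is the law of the output. -/
noncomputable def gaussMix {n d : ℕ} (k : ℕ) (σ : ℝ) (X : Matrix (Fin n) (Fin d) ℝ) :
    Measure (Fin k → Fin d → ℝ) :=
  Measure.map (fun p => fun i j => (∑ l, p.1 i l * X l j) + σ * p.2 i j)
    ((stdGaussMat k n).prod (stdGaussMat k d))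

/-- The `α`-Rényi divergence `D_α(P‖Q) = (α-1)⁻¹ log ∫ (dP/dQ)^α dQ`. -/
noncomputable def renyiDiv {Ω : Type*} [MeasurableSpace Ω] (α : ℝ) (P Q : Measure Ω) : ℝ :=
  (α - 1)⁻¹ * Real.log (∫ x, ((P.rnDeriv Q) x).toReal ^ α ∂Q)

/-- The privacy curve `φ(α; k, ζ)`. -/
noncomputable def phi (α k ζ : ℝ) : ℝ :=
  k * α / (2 * (α - 1)) * Real.log (1 - 1 / ζ)
    - k / (2 * (α - 1)) * Real.log (1 - α / ζ)

/-- Minimal eigenvalue of a (Hermitian) real matrix. -/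
noncomputable def lamMin {d : ℕ} (A : Matrix (Fin d) (Fin d) ℝ) : ℝ :=
  if h : A.IsHermitian then ⨅ i, h.eigenvalues i else 0

/-!
The rows of `M(X)` are i.i.d. `N(0, XᵀX + σ²I)`, so the divergence is `k` times that of a single
row. Deleting the row `x` of `X` perturbs the covariance `S = XᵀX + σ²I` to `S - xxᵀ`. For
this pair the functional `y ↦ ⟨S⁻¹x, y⟩` is a sufficient statistic: the residual of `y` along `x` is
independent of it and has the same law under both Gaussians. The divergence is therefore that of two
centered Gaussians on the line, with variances in the ratio `1 - s`, where `s = xᵀS⁻¹x` is the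
leverage of `x`.

From `X` to `X'` it is exactly `φ(α; k, 1/s)`. From `X'` to `X` it is at most that: for
`c = 2α - 1` and `u = s / (2 - s)` the difference reduces to
`c log ((1 + u) / (1 - u)) ≤ log ((1 + cu) / (1 - cu))`, which holds term by term on power series.
The power series of `φ(α; k, 1/s)` in `s` has nonnegative coefficients as well, so this is
increasing in `s`, and `s ≤ ‖x‖² / (σ² + λ̄_min) ≤ 1/γ`.
-/

section RenyiDivergence

variable {Ω Ω' : Type*} [MeasurableSpace Ω] [MeasurableSpace Ω']

lemma renyiDiv_self (α : ℝ) (P : Measure Ω) [IsProbabilityMeasure P] : renyiDiv α P P = 0 := by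
  have h : ∫ x, (P.rnDeriv P x).toReal ^ α ∂P = ∫ _, 1 ∂P :=
    integral_congr_ae <| P.rnDeriv_self.mono fun x hx ↦ by simp [hx]
  simp [renyiDiv, h]

lemma renyiDiv_map {f : Ω → Ω'} (hf : MeasurableEmbedding f) (α : ℝ) (P Q : Measure Ω)
    [SigmaFinite P] [SigmaFinite Q] : renyiDiv α (P.map f) (Q.map f) = renyiDiv α P Q := by
  unfold renyiDiv
  rw [hf.integral_map]
  congr 2
  exact integral_congr_ae <| (hf.rnDeriv_map P Q).mono fun x hx ↦ by simp only [hx]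

lemma renyiDiv_withDensity (α : ℝ) (Q : Measure Ω) [SigmaFinite Q] {f : Ω → ENNReal}
    (hf : Measurable f) :
    renyiDiv α (Q.withDensity f) Q = (α - 1)⁻¹ * Real.log (∫ x, (f x).toReal ^ α ∂Q) := by
  unfold renyiDiv
  congr 2
  exact integral_congr_ae <| (Q.rnDeriv_withDensity hf).mono fun x hx ↦ by simp only [hx]

lemma renyiDiv_prod_left (α : ℝ) (R : Measure Ω') [IsProbabilityMeasure R] {P Q : Measure Ω}
    [SigmaFinite P] [SigmaFinite Q] (hPQ : P ≪ Q) :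
    renyiDiv α (R.prod P) (R.prod Q) = renyiDiv α P Q := by
  have hf := P.measurable_rnDeriv Q
  have hprod := renyiDiv_withDensity α (R.prod Q) (hf.comp measurable_snd)
  rw [Function.comp_def, ← prod_withDensity_right hf, Measure.withDensity_rnDeriv_eq P Q hPQ,
    integral_fun_snd (fun y ↦ (P.rnDeriv Q y).toReal ^ α)] at hprod
  rw [hprod, renyiDiv, probReal_univ, one_smul]

lemma lintegral_pi_prod {ι : Type*} [Fintype ι] {E : ι → Type*} [∀ i, MeasurableSpace (E i)]
    (μ : ∀ i, Measure (E i)) [∀ i, IsProbabilityMeasure (μ i)] {f : ∀ i, E i → ENNReal}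
    (hf : ∀ i, Measurable (f i)) :
    ∫⁻ x, ∏ i, f i (x i) ∂Measure.pi μ = ∏ i, ∫⁻ y, f i y ∂μ i := by
  rw [lintegral_prod_eq_prod_lintegral_of_indepFun _ _ (iIndepFun_pi fun i ↦ (hf i).aemeasurable)
    fun i ↦ (hf i).comp (measurable_pi_apply i)]
  exact Finset.prod_congr rfl fun i _ ↦ (measurePreserving_eval μ i).lintegral_comp (hf i)

lemma pi_withDensity {ι : Type*} [Fintype ι] {E : ι → Type*} [∀ i, MeasurableSpace (E i)]
    (μ : ∀ i, Measure (E i)) [∀ i, IsProbabilityMeasure (μ i)] {f : ∀ i, E i → ENNReal}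
    (hf : ∀ i, Measurable (f i)) [∀ i, SigmaFinite ((μ i).withDensity (f i))] :
    Measure.pi (fun i ↦ (μ i).withDensity (f i)) =
      (Measure.pi μ).withDensity fun x ↦ ∏ i, f i (x i) := by
  refine Measure.pi_eq fun s hs ↦ ?_
  have hind : (Set.univ.pi s).indicator (fun x ↦ ∏ i, f i (x i)) =
      fun x ↦ ∏ i, (s i).indicator (f i) (x i) := by
    classical
    ext x
    simp [Set.indicator_apply, Finset.prod_ite_zero]
  rw [withDensity_apply _ (.univ_pi hs), ← lintegral_indicator (.univ_pi hs), hind,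
    lintegral_pi_prod μ fun i ↦ (hf i).indicator (hs i)]
  exact Finset.prod_congr rfl fun i _ ↦ by
    rw [lintegral_indicator (hs i), withDensity_apply _ (hs i)]

lemma renyiDiv_pi_const {ι : Type*} [Fintype ι] (α : ℝ) {P Q : Measure Ω}
    [IsProbabilityMeasure P] [IsProbabilityMeasure Q] (hPQ : P ≪ Q) :
    renyiDiv α (Measure.pi fun _ : ι ↦ P) (Measure.pi fun _ : ι ↦ Q) =
      Fintype.card ι * renyiDiv α P Q := by
  have hf := P.measurable_rnDeriv Q
  have hQ := Measure.withDensity_rnDeriv_eq P Q hPQ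
  have : SigmaFinite (Q.withDensity (P.rnDeriv Q)) := hQ ▸ inferInstance
  have hpi := renyiDiv_withDensity α (Measure.pi fun _ : ι ↦ Q)
    (f := fun x ↦ ∏ i, P.rnDeriv Q (x i)) (by fun_prop)
  rw [← pi_withDensity (fun _ : ι ↦ Q) fun _ ↦ hf, hQ] at hpi
  simp only [ENNReal.toReal_prod, ← Real.finsetProd_rpow _ _ fun _ _ ↦ ENNReal.toReal_nonneg] at hpi
  rw [hpi, integral_fintype_prod_eq_pow fun y ↦ (P.rnDeriv Q y).toReal ^ α, Real.log_pow,
    renyiDiv]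
  ring

end RenyiDivergence

section RealGaussian

lemma gaussianPDFReal_mul_div_rpow (μ α : ℝ) {u v : NNReal} (hu : u ≠ 0) (hv : v ≠ 0) (t : ℝ) :
    gaussianPDFReal μ v t * (gaussianPDFReal μ u t / gaussianPDFReal μ v t) ^ α =
      (√(2 * Real.pi * v))⁻¹ * √(v / u) ^ α *
        Real.exp (-((α * (v / u) - (α - 1)) / (2 * v)) * (t - μ) ^ 2) := by
  have hu' : (0 : ℝ) < u := by positivity
  have hv' : (0 : ℝ) < v := by positivity
  have hratio : gaussianPDFReal μ u t / gaussianPDFReal μ v t =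
      √(v / u) * Real.exp (((v : ℝ)⁻¹ - (u : ℝ)⁻¹) / 2 * (t - μ) ^ 2) := by
    rw [gaussianPDFReal, gaussianPDFReal, mul_div_mul_comm, ← Real.exp_sub,
      Real.sqrt_div' _ hu'.le, Real.sqrt_mul' _ hu'.le, Real.sqrt_mul' _ hv'.le]
    congr 1
    · field_simp
    · congr 1
      field_simp
      ring
  rw [hratio, Real.mul_rpow (by positivity) (by positivity), ← Real.exp_mul, gaussianPDFReal,
    mul_mul_mul_comm, ← Real.exp_add]
  congr 2
  field_simp
  ring

lemma gaussianReal_absolutelyContinuous_gaussianReal (μ₁ μ₂ : ℝ) {u v : NNReal} (hu : u ≠ 0)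
    (hv : v ≠ 0) : gaussianReal μ₁ u ≪ gaussianReal μ₂ v :=
  (gaussianReal_absolutelyContinuous μ₁ hu).trans (gaussianReal_absolutelyContinuous' μ₂ hv)

lemma rnDeriv_gaussianReal_gaussianReal (μ₁ μ₂ : ℝ) {u v : NNReal} (hu : u ≠ 0) (hv : v ≠ 0) :
    (gaussianReal μ₁ u).rnDeriv (gaussianReal μ₂ v) =ᵐ[gaussianReal μ₂ v]
      fun t ↦ gaussianPDF μ₁ u t / gaussianPDF μ₂ v t := by
  have hac := gaussianReal_absolutelyContinuous μ₂ hv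
  filter_upwards [Measure.rnDeriv_eq_div (gaussianReal_absolutelyContinuous μ₁ hu) hac,
    hac (rnDeriv_gaussianReal μ₁ u), hac (rnDeriv_gaussianReal μ₂ v)] with t h h₁ h₂
  rw [h, h₁, h₂]

lemma integral_rnDeriv_gaussianReal_rpow (μ : ℝ) {u v : NNReal} (hu : u ≠ 0) (hv : v ≠ 0) (α : ℝ) :
    ∫ t, ((gaussianReal μ u).rnDeriv (gaussianReal μ v) t).toReal ^ α ∂gaussianReal μ v =
      √(v / u) ^ α * (√(α * (v / u) - (α - 1)))⁻¹ := by
  calc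
    _ = ∫ t, (gaussianPDFReal μ u t / gaussianPDFReal μ v t) ^ α ∂gaussianReal μ v :=
      integral_congr_ae <| (rnDeriv_gaussianReal_gaussianReal μ μ hu hv).mono fun t ht ↦ by
        simp only [ht, ENNReal.toReal_div, toReal_gaussianPDF]
    _ = (√(2 * Real.pi * v))⁻¹ * √(v / u) ^ α *
        ∫ t, Real.exp (-((α * (v / u) - (α - 1)) / (2 * v)) * (t - μ) ^ 2) := by
      simp_rw [integral_gaussianReal_eq_integral_smul hv, smul_eq_mul,
        gaussianPDFReal_mul_div_rpow μ α hu hv, integral_const_mul]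
    _ = _ := by
      rw [integral_sub_right_eq_self (fun t ↦ Real.exp (_ * t ^ 2)), integral_gaussian, ← div_mul,
        mul_comm (√(2 * Real.pi * v))⁻¹, mul_assoc, ← Real.sqrt_inv, ← Real.sqrt_inv,
        ← Real.sqrt_mul (by positivity)]
      congr 2
      have hv' : (v : ℝ) ≠ 0 := by exact_mod_cast hv
      field_simp

lemma renyiDiv_gaussianReal (μ : ℝ) {u v : NNReal} (hu : u ≠ 0) (hv : v ≠ 0) {α : ℝ}
    (h : 0 < α * (v / u) - (α - 1)) :
    renyiDiv α (gaussianReal μ u) (gaussianReal μ v) =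
      (2 * (α - 1))⁻¹ * (α * Real.log (v / u) - Real.log (α * (v / u) - (α - 1))) := by
  have hvu : (0 : ℝ) < v / u := by positivity
  rw [renyiDiv, integral_rnDeriv_gaussianReal_rpow μ hu hv, Real.log_mul (by positivity)
    (by positivity), Real.log_rpow (by positivity), Real.log_inv, Real.log_sqrt hvu.le,
    Real.log_sqrt h.le, mul_inv]
  ring

end RealGaussian

section GaussianSufficiency

variable {E : Type*} [NormedAddCommGroup E] [NormedSpace ℝ E]

/-- The map `y ↦ y - w y • a`, which is the projection onto `ker w` along `a` when `w a = 1`: the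
residual of `y` once its coordinate `w y` has been read off. -/
noncomputable def kerProj (w : StrongDual ℝ E) (a : E) : E →L[ℝ] E :=
  .id ℝ E - w.smulRight a

lemma kerProj_apply (w : StrongDual ℝ E) (a y : E) : kerProj w a y = y - w y • a := rfl

lemma comp_kerProj_apply_self {w : StrongDual ℝ E} {a : E} (ha : w a = 1) (L : StrongDual ℝ E) :
    (L ∘L kerProj w a) a = 0 := by
  simp [kerProj_apply, ha]

variable [MeasurableSpace E] [BorelSpace E]

/-- The functional `w` is a sufficient statistic for the pair of Gaussian measures `{P, Q}`: the
residual `y - w y • a` is uncorrelated with `w y` under both and has the same mean and covariance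
under both. The functionals of the residual are encoded as those vanishing at `a`. -/
structure IsSufficientFunctional (w : StrongDual ℝ E) (a : E) (P Q : Measure E) : Prop where
  apply_eq_one : w a = 1
  integral_eq : P[id] = Q[id]
  covariance_left : ∀ L : StrongDual ℝ E, L a = 0 → covarianceBilinDual P L w = 0
  covariance_right : ∀ L : StrongDual ℝ E, L a = 0 → covarianceBilinDual Q L w = 0
  variance_eq : ∀ L : StrongDual ℝ E, L a = 0 →
    covarianceBilinDual P L L = covarianceBilinDual Q L L

lemma measurableEmbedding_kerProj_prod (w : StrongDual ℝ E) (a : E) :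
    MeasurableEmbedding ((kerProj w a).prod w) := by
  have hinv : Function.LeftInverse (fun p : E × ℝ ↦ p.1 + p.2 • a) ((kerProj w a).prod w) :=
    fun y ↦ by simp [kerProj_apply]
  exact (hinv.isClosedEmbedding (by fun_prop) (by fun_prop)).measurableEmbedding

variable [SecondCountableTopology E] [CompleteSpace E]

lemma map_kerProj_prod {w : StrongDual ℝ E} {a : E} (ha : w a = 1) (P : Measure E) [IsGaussian P]
    (hP : ∀ L : StrongDual ℝ E, L a = 0 → covarianceBilinDual P L w = 0) :
    P.map ((kerProj w a).prod w) = (P.map (kerProj w a)).prod (P.map w) := by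
  have hind : IndepFun (kerProj w a) w P := by
    refine HasGaussianLaw.indepFun_of_covariance_strongDual ⟨?_⟩ fun L₁ L₂ ↦ ?_
    · exact isGaussian_map ((kerProj w a).prod w)
    · have hL₂ : L₂ ∘L w = L₂ 1 • w := by
        ext y
        simpa [mul_comm] using L₂.map_smul (w y) 1
      calc cov[L₁ ∘ kerProj w a, L₂ ∘ w; P]
        _ = covarianceBilinDual P (L₁ ∘L kerProj w a) (L₂ ∘L w) :=
          (covarianceBilinDual_eq_covariance IsGaussian.memLp_two_id (L₁ ∘L kerProj w a)
            (L₂ ∘L w)).symm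
        _ = 0 := by rw [hL₂, map_smul, hP _ (comp_kerProj_apply_self ha L₁), smul_zero]
  exact (indepFun_iff_map_prod_eq_prod_map_map (kerProj w a).measurable.aemeasurable
    w.measurable.aemeasurable).mp hind

namespace IsSufficientFunctional

variable {w : StrongDual ℝ E} {a : E} {P Q : Measure E} [IsGaussian Q]

lemma map_eq_prod_right (h : IsSufficientFunctional w a P Q) :
    Q.map ((kerProj w a).prod w) = (Q.map (kerProj w a)).prod (Q.map w) :=
  map_kerProj_prod h.apply_eq_one Q h.covariance_right

variable [IsGaussian P]

lemma map_kerProj_eq (h : IsSufficientFunctional w a P Q) :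
    P.map (kerProj w a) = Q.map (kerProj w a) := by
  refine Measure.ext_of_charFunDual <| funext fun L ↦ ?_
  rw [charFunDual_map, charFunDual_map, IsGaussian.charFunDual_eq', IsGaussian.charFunDual_eq',
    h.integral_eq, h.variance_eq _ (comp_kerProj_apply_self h.apply_eq_one L)]

lemma map_eq_prod_left (h : IsSufficientFunctional w a P Q) :
    P.map ((kerProj w a).prod w) = (Q.map (kerProj w a)).prod (P.map w) := by
  rw [map_kerProj_prod h.apply_eq_one P h.covariance_left, h.map_kerProj_eq]

lemma absolutelyContinuous (h : IsSufficientFunctional w a P Q) (hac : P.map w ≪ Q.map w) :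
    P ≪ Q := by
  have he := measurableEmbedding_kerProj_prod w a
  have hmap : P.map ((kerProj w a).prod w) ≪ Q.map ((kerProj w a).prod w) := by
    rw [h.map_eq_prod_left, h.map_eq_prod_right]
    exact Measure.AbsolutelyContinuous.rfl.prod hac
  intro s hs
  rw [← he.injective.preimage_image s, ← he.map_apply] at hs ⊢
  exact hmap hs

theorem renyiDiv_eq (h : IsSufficientFunctional w a P Q) (hac : P.map w ≪ Q.map w) (α : ℝ) :
    renyiDiv α P Q = renyiDiv α (P.map w) (Q.map w) := by
  rw [← renyiDiv_map (measurableEmbedding_kerProj_prod w a), h.map_eq_prod_left,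
    h.map_eq_prod_right, renyiDiv_prod_left α _ hac]

end IsSufficientFunctional

end GaussianSufficiency

section RankOnePerturbation

variable {ι : Type*} {S : Matrix ι ι ℝ}

lemma posDef_of_posSemidef_sub_smul_one [DecidableEq ι] {c : ℝ} (hc : 0 < c)
    (hS : (S - c • 1).PosSemidef) : S.PosDef := by
  simpa using PosDef.posSemidef_add hS (PosDef.one.smul hc)

variable [Fintype ι]

lemma dotProduct_mulVec_comm (hS : S.IsHermitian) (x y : ι → ℝ) :
    x ⬝ᵥ S *ᵥ y = y ⬝ᵥ S *ᵥ x := by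
  rw [dotProduct_mulVec, ← mulVec_transpose, dotProduct_comm,
    ← conjTranspose_eq_transpose_of_trivial, hS.eq]

lemma sq_dotProduct_mulVec_le (hS : S.PosSemidef) (x y : ι → ℝ) :
    (x ⬝ᵥ S *ᵥ y) ^ 2 ≤ (x ⬝ᵥ S *ᵥ x) * (y ⬝ᵥ S *ᵥ y) := by
  classical
  have h := LinearMap.BilinForm.apply_mul_apply_le_of_forall_zero_le (toLinearMap₂' ℝ S)
    (fun z ↦ by simpa [toLinearMap₂'_apply'] using hS.dotProduct_mulVec_nonneg z) x y
  simp only [toLinearMap₂'_apply'] at h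
  rwa [dotProduct_mulVec_comm hS.isHermitian y x, ← sq] at h

lemma add_smul_vecMulVec_mulVec (S : Matrix ι ι ℝ) (a x : ι → ℝ) (c : ℝ) :
    (S + c • vecMulVec a a) *ᵥ x = S *ᵥ x + (c * (a ⬝ᵥ x)) • a := by
  simp [add_mulVec, smul_mulVec, vecMulVec_mulVec, mul_smul]

variable [DecidableEq ι]

lemma mulVec_inv_mulVec (hS : S.PosDef) (a : ι → ℝ) : S *ᵥ S⁻¹ *ᵥ a = a := by
  rw [mulVec_mulVec, mul_nonsing_inv _ hS.det_pos.ne'.isUnit, one_mulVec]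

lemma dotProduct_inv_mulVec_pos (hS : S.PosDef) {a : ι → ℝ} (ha : a ≠ 0) :
    0 < a ⬝ᵥ S⁻¹ *ᵥ a := by
  simpa using hS.inv.dotProduct_mulVec_pos ha

lemma dotProduct_inv_mulVec_nonneg (hS : S.PosDef) (a : ι → ℝ) : 0 ≤ a ⬝ᵥ S⁻¹ *ᵥ a := by
  simpa using hS.inv.posSemidef.dotProduct_mulVec_nonneg a

lemma sq_dotProduct_le (hS : S.PosDef) (a x : ι → ℝ) :
    (a ⬝ᵥ x) ^ 2 ≤ (a ⬝ᵥ S⁻¹ *ᵥ a) * (x ⬝ᵥ S *ᵥ x) := by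
  have h := sq_dotProduct_mulVec_le hS.posSemidef x (S⁻¹ *ᵥ a)
  rw [mulVec_inv_mulVec hS, dotProduct_comm (S⁻¹ *ᵥ a), mul_comm] at h
  rwa [dotProduct_comm a x]

lemma posDef_add_smul_vecMulVec (hS : S.PosDef) (a : ι → ℝ) {c : ℝ}
    (h : 0 < 1 + c * (a ⬝ᵥ S⁻¹ *ᵥ a)) : (S + c • vecMulVec a a).PosDef := by
  have hherm : (S + c • vecMulVec a a).IsHermitian := by
    refine hS.isHermitian.add ?_
    simp [IsHermitian, conjTranspose_eq_transpose_of_trivial, transpose_vecMulVec]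
  refine .of_dotProduct_mulVec_pos hherm fun x hx ↦ ?_
  have hx' : 0 < x ⬝ᵥ S *ᵥ x := by simpa using hS.dotProduct_mulVec_pos hx
  have hquad : star x ⬝ᵥ (S + c • vecMulVec a a) *ᵥ x = x ⬝ᵥ S *ᵥ x + c * (a ⬝ᵥ x) ^ 2 := by
    rw [add_smul_vecMulVec_mulVec, star_trivial, dotProduct_add, dotProduct_smul, smul_eq_mul,
      dotProduct_comm x a]
    ring
  rw [hquad]
  rcases le_total 0 c with hc | hc
  · positivity
  · nlinarith [mul_le_mul_of_nonpos_left (sq_dotProduct_le hS a x) hc, mul_pos h hx']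

/-- This is the Sherman–Morrison formula, applied to the vector `a` of the perturbation. -/
lemma add_smul_vecMulVec_inv_mulVec (hS : S.PosDef) (a : ι → ℝ) {c : ℝ}
    (h : 0 < 1 + c * (a ⬝ᵥ S⁻¹ *ᵥ a)) :
    (S + c • vecMulVec a a)⁻¹ *ᵥ a = (1 + c * (a ⬝ᵥ S⁻¹ *ᵥ a))⁻¹ • S⁻¹ *ᵥ a := by
  have hT := posDef_add_smul_vecMulVec hS a h
  have hmul : (S + c • vecMulVec a a) *ᵥ S⁻¹ *ᵥ a = (1 + c * (a ⬝ᵥ S⁻¹ *ᵥ a)) • a := by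
    rw [add_smul_vecMulVec_mulVec, mulVec_inv_mulVec hS, add_smul, one_smul]
  rw [eq_inv_smul_iff₀ h.ne', ← mulVec_smul, ← hmul, mulVec_mulVec,
    nonsing_inv_mul _ hT.det_pos.ne'.isUnit, one_mulVec]

lemma dotProduct_inv_mulVec_le {c : ℝ} (hc : 0 < c) (hS : (S - c • 1).PosSemidef) (a : ι → ℝ) :
    a ⬝ᵥ S⁻¹ *ᵥ a ≤ (a ⬝ᵥ a) / c := by
  have hpos := posDef_of_posSemidef_sub_smul_one hc hS
  set w := S⁻¹ *ᵥ a
  have hw : a ⬝ᵥ w = w ⬝ᵥ S *ᵥ w := by rw [mulVec_inv_mulVec hpos, dotProduct_comm]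
  have hcw : c * (w ⬝ᵥ w) ≤ w ⬝ᵥ S *ᵥ w := by
    simpa [sub_mulVec, smul_mulVec, dotProduct_sub] using hS.dotProduct_mulVec_nonneg w
  have hsq : 0 ≤ (a - c • w) ⬝ᵥ (a - c • w) := by
    simpa using dotProduct_star_self_nonneg (a - c • w)
  have hexp : (a - c • w) ⬝ᵥ (a - c • w) = a ⬝ᵥ a - 2 * c * (a ⬝ᵥ w) + c ^ 2 * (w ⬝ᵥ w) := by
    simp only [sub_dotProduct, dotProduct_sub, smul_dotProduct, dotProduct_smul, smul_eq_mul,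
      dotProduct_comm w a]
    ring
  rw [le_div_iff₀ hc]
  nlinarith [mul_le_mul_of_nonneg_left hcw hc.le]

end RankOnePerturbation

section MultivariateGaussian

variable {ι : Type*} [Fintype ι]

/-- The linear functional `y ↦ v ⬝ᵥ y` on Euclidean space. -/
noncomputable def dotDual (v : ι → ℝ) : StrongDual ℝ (EuclideanSpace ℝ ι) :=
  InnerProductSpace.toDual ℝ _ (WithLp.toLp 2 v)

lemma dotDual_apply (v : ι → ℝ) (y : EuclideanSpace ℝ ι) : dotDual v y = v ⬝ᵥ y.ofLp := by
  simp [dotDual, EuclideanSpace.inner_eq_star_dotProduct, dotProduct_comm]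

lemma dotDual_surjective : Function.Surjective (dotDual (ι := ι)) :=
  (InnerProductSpace.toDual ℝ (EuclideanSpace ℝ ι)).surjective.comp (WithLp.toLp_surjective 2)

variable [DecidableEq ι] {S : Matrix ι ι ℝ}

lemma covarianceBilinDual_multivariateGaussian (μ : EuclideanSpace ℝ ι) (hS : S.PosSemidef)
    (v w : ι → ℝ) :
    covarianceBilinDual (multivariateGaussian μ S) (dotDual v) (dotDual w) = v ⬝ᵥ S *ᵥ w := by
  rw [← covarianceBilin_multivariateGaussian hS]
  rfl

lemma map_dotDual_multivariateGaussian (μ : EuclideanSpace ℝ ι) (hS : S.PosSemidef)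
    (w : ι → ℝ) :
    (multivariateGaussian μ S).map (dotDual w) =
      gaussianReal (w ⬝ᵥ μ.ofLp) (w ⬝ᵥ S *ᵥ w).toNNReal := by
  rw [IsGaussian.map_eq_gaussianReal,
    ← covarianceBilinDual_self_eq_variance IsGaussian.memLp_two_id,
    covarianceBilinDual_multivariateGaussian μ hS, IsGaussian.integral_dual,
    integral_id_multivariateGaussian, dotDual_apply]

/-- The vector `w` for which `w ⬝ᵥ y` is a sufficient statistic for the covariance matrices
`S + c • a aᵀ`, normalised by `w ⬝ᵥ a = 1`. -/
noncomputable def sufficientVec (S : Matrix ι ι ℝ) (a : ι → ℝ) : ι → ℝ :=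
  (a ⬝ᵥ S⁻¹ *ᵥ a)⁻¹ • S⁻¹ *ᵥ a

lemma sufficientVec_dotProduct (hS : S.PosDef) {a : ι → ℝ} (ha : a ≠ 0) :
    sufficientVec S a ⬝ᵥ a = 1 := by
  rw [sufficientVec, smul_dotProduct, dotProduct_comm (S⁻¹ *ᵥ a), smul_eq_mul,
    inv_mul_cancel₀ (dotProduct_inv_mulVec_pos hS ha).ne']

lemma mulVec_sufficientVec (hS : S.PosDef) (a : ι → ℝ) :
    S *ᵥ sufficientVec S a = (a ⬝ᵥ S⁻¹ *ᵥ a)⁻¹ • a := by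
  rw [sufficientVec, mulVec_smul, mulVec_inv_mulVec hS]

lemma add_smul_vecMulVec_mulVec_sufficientVec (hS : S.PosDef) {a : ι → ℝ} (ha : a ≠ 0) (c : ℝ) :
    (S + c • vecMulVec a a) *ᵥ sufficientVec S a = ((a ⬝ᵥ S⁻¹ *ᵥ a)⁻¹ + c) • a := by
  rw [add_smul_vecMulVec_mulVec, mulVec_sufficientVec hS, dotProduct_comm a (sufficientVec S a),
    sufficientVec_dotProduct hS ha, mul_one, add_smul]

lemma isSufficientFunctional_multivariateGaussian (μ : EuclideanSpace ℝ ι) (hS : S.PosDef)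
    {a : ι → ℝ} (ha : a ≠ 0) {c : ℝ} (h : 0 < 1 + c * (a ⬝ᵥ S⁻¹ *ᵥ a)) :
    IsSufficientFunctional (dotDual (sufficientVec S a)) (WithLp.toLp 2 a)
      (multivariateGaussian μ S) (multivariateGaussian μ (S + c • vecMulVec a a)) := by
  have hT := (posDef_add_smul_vecMulVec hS a h).posSemidef
  have hdual (L : StrongDual ℝ (EuclideanSpace ℝ ι)) (hL : L (WithLp.toLp 2 a) = 0) :
      ∃ x, L = dotDual x ∧ x ⬝ᵥ a = 0 := by
    obtain ⟨x, rfl⟩ := dotDual_surjective L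
    exact ⟨x, rfl, by rwa [dotDual_apply] at hL⟩
  refine ⟨?_, by simp, fun L hL ↦ ?_, fun L hL ↦ ?_, fun L hL ↦ ?_⟩
  · rw [dotDual_apply, sufficientVec_dotProduct hS ha]
  all_goals obtain ⟨x, rfl, hx⟩ := hdual L hL
  · rw [covarianceBilinDual_multivariateGaussian μ hS.posSemidef, mulVec_sufficientVec hS,
      dotProduct_smul, hx, smul_zero]
  · rw [covarianceBilinDual_multivariateGaussian μ hT,
      add_smul_vecMulVec_mulVec_sufficientVec hS ha, dotProduct_smul, hx, smul_zero]
  · rw [covarianceBilinDual_multivariateGaussian μ hS.posSemidef,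
      covarianceBilinDual_multivariateGaussian μ hT, add_smul_vecMulVec_mulVec,
      dotProduct_comm a x, hx, mul_zero, zero_smul, add_zero]

lemma map_sufficientVec_multivariateGaussian (μ : EuclideanSpace ℝ ι) (hS : S.PosDef)
    {a : ι → ℝ} (ha : a ≠ 0) {c : ℝ} (h : 0 < 1 + c * (a ⬝ᵥ S⁻¹ *ᵥ a)) :
    (multivariateGaussian μ (S + c • vecMulVec a a)).map (dotDual (sufficientVec S a)) =
      gaussianReal (sufficientVec S a ⬝ᵥ μ.ofLp) ((a ⬝ᵥ S⁻¹ *ᵥ a)⁻¹ + c).toNNReal := by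
  rw [map_dotDual_multivariateGaussian μ (posDef_add_smul_vecMulVec hS a h).posSemidef,
    add_smul_vecMulVec_mulVec_sufficientVec hS ha, dotProduct_smul,
    sufficientVec_dotProduct hS ha, smul_eq_mul, mul_one]

lemma map_sufficientVec_multivariateGaussian_self (μ : EuclideanSpace ℝ ι) (hS : S.PosDef)
    {a : ι → ℝ} (ha : a ≠ 0) :
    (multivariateGaussian μ S).map (dotDual (sufficientVec S a)) =
      gaussianReal (sufficientVec S a ⬝ᵥ μ.ofLp) (a ⬝ᵥ S⁻¹ *ᵥ a)⁻¹.toNNReal := by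
  simpa using map_sufficientVec_multivariateGaussian μ hS ha (c := 0) (by simp)

lemma inv_add_pos_of_one_add_mul_pos {s c : ℝ} (hs : 0 < s) (h : 0 < 1 + c * s) :
    0 < s⁻¹ + c := by
  have : s⁻¹ + c = (1 + c * s) / s := by field_simp
  exact this ▸ div_pos h hs

lemma absolutelyContinuous_map_sufficientVec (μ : EuclideanSpace ℝ ι) (hS : S.PosDef)
    {a : ι → ℝ} (ha : a ≠ 0) {c : ℝ} (h : 0 < 1 + c * (a ⬝ᵥ S⁻¹ *ᵥ a)) :
    (multivariateGaussian μ S).map (dotDual (sufficientVec S a)) ≪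
      (multivariateGaussian μ (S + c • vecMulVec a a)).map (dotDual (sufficientVec S a)) := by
  have hs := dotProduct_inv_mulVec_pos hS ha
  rw [map_sufficientVec_multivariateGaussian_self μ hS ha,
    map_sufficientVec_multivariateGaussian μ hS ha h]
  exact gaussianReal_absolutelyContinuous_gaussianReal _ _
    (Real.toNNReal_pos.mpr (inv_pos.mpr hs)).ne'
    (Real.toNNReal_pos.mpr (inv_add_pos_of_one_add_mul_pos hs h)).ne'

theorem absolutelyContinuous_multivariateGaussian_add_smul_vecMulVec (μ : EuclideanSpace ℝ ι)
    (hS : S.PosDef) (a : ι → ℝ) {c : ℝ} (h : 0 < 1 + c * (a ⬝ᵥ S⁻¹ *ᵥ a)) :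
    multivariateGaussian μ S ≪ multivariateGaussian μ (S + c • vecMulVec a a) := by
  rcases eq_or_ne a 0 with rfl | ha
  · simpa using Measure.AbsolutelyContinuous.rfl
  · exact (isSufficientFunctional_multivariateGaussian μ hS ha h).absolutelyContinuous
      (absolutelyContinuous_map_sufficientVec μ hS ha h)

theorem renyiDiv_multivariateGaussian_add_smul_vecMulVec (μ : EuclideanSpace ℝ ι)
    (hS : S.PosDef) (a : ι → ℝ) {α c : ℝ} (h : 0 < 1 + c * (a ⬝ᵥ S⁻¹ *ᵥ a))
    (hα : 0 < 1 + α * c * (a ⬝ᵥ S⁻¹ *ᵥ a)) :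
    renyiDiv α (multivariateGaussian μ S) (multivariateGaussian μ (S + c • vecMulVec a a)) =
      (2 * (α - 1))⁻¹ * (α * Real.log (1 + c * (a ⬝ᵥ S⁻¹ *ᵥ a)) -
        Real.log (1 + α * c * (a ⬝ᵥ S⁻¹ *ᵥ a))) := by
  rcases eq_or_ne a 0 with rfl | ha
  · simp [renyiDiv_self]
  rw [(isSufficientFunctional_multivariateGaussian μ hS ha h).renyiDiv_eq
      (absolutelyContinuous_map_sufficientVec μ hS ha h),
    map_sufficientVec_multivariateGaussian_self μ hS ha,
    map_sufficientVec_multivariateGaussian μ hS ha h]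
  have hs := dotProduct_inv_mulVec_pos hS ha
  set s := a ⬝ᵥ S⁻¹ *ᵥ a
  have hq := inv_add_pos_of_one_add_mul_pos hs h
  have hratio : (((s⁻¹ + c).toNNReal : ℝ) / s⁻¹.toNNReal) = 1 + c * s := by
    rw [Real.coe_toNNReal _ hq.le, Real.coe_toNNReal _ (inv_nonneg.mpr hs.le)]
    field_simp
  have hlin : α * (1 + c * s) - (α - 1) = 1 + α * c * s := by ring
  rw [renyiDiv_gaussianReal _ (Real.toNNReal_pos.mpr (inv_pos.mpr hs)).ne'
    (Real.toNNReal_pos.mpr hq).ne' (by rwa [hratio, hlin]), hratio, hlin]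

lemma one_add_mul_neg_mul_dotProduct_inv_mulVec (hS : S.PosDef) (a : ι → ℝ) (b : ℝ) {c : ℝ}
    (h : 0 < 1 + c * (a ⬝ᵥ S⁻¹ *ᵥ a)) :
    1 + b * -c * (a ⬝ᵥ (S + c • vecMulVec a a)⁻¹ *ᵥ a) =
      (1 + (1 - b) * c * (a ⬝ᵥ S⁻¹ *ᵥ a)) / (1 + c * (a ⬝ᵥ S⁻¹ *ᵥ a)) := by
  rw [add_smul_vecMulVec_inv_mulVec hS a h, dotProduct_smul, smul_eq_mul]
  field_simp
  ring

lemma one_add_neg_mul_dotProduct_inv_mulVec (hS : S.PosDef) (a : ι → ℝ) {c : ℝ}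
    (h : 0 < 1 + c * (a ⬝ᵥ S⁻¹ *ᵥ a)) :
    1 + -c * (a ⬝ᵥ (S + c • vecMulVec a a)⁻¹ *ᵥ a) = (1 + c * (a ⬝ᵥ S⁻¹ *ᵥ a))⁻¹ := by
  simpa using one_add_mul_neg_mul_dotProduct_inv_mulVec hS a 1 h

lemma one_add_neg_mul_dotProduct_inv_mulVec_pos (hS : S.PosDef) (a : ι → ℝ) {c : ℝ}
    (h : 0 < 1 + c * (a ⬝ᵥ S⁻¹ *ᵥ a)) :
    0 < 1 + -c * (a ⬝ᵥ (S + c • vecMulVec a a)⁻¹ *ᵥ a) := by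
  rw [one_add_neg_mul_dotProduct_inv_mulVec hS a h]
  positivity

theorem absolutelyContinuous_multivariateGaussian_add_smul_vecMulVec_left
    (μ : EuclideanSpace ℝ ι) (hS : S.PosDef) (a : ι → ℝ) {c : ℝ}
    (h : 0 < 1 + c * (a ⬝ᵥ S⁻¹ *ᵥ a)) :
    multivariateGaussian μ (S + c • vecMulVec a a) ≪ multivariateGaussian μ S := by
  simpa [add_assoc] using absolutelyContinuous_multivariateGaussian_add_smul_vecMulVec μ
    (posDef_add_smul_vecMulVec hS a h) a (one_add_neg_mul_dotProduct_inv_mulVec_pos hS a h)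

theorem renyiDiv_multivariateGaussian_add_smul_vecMulVec_left (μ : EuclideanSpace ℝ ι)
    (hS : S.PosDef) (a : ι → ℝ) {α c : ℝ} (h : 0 < 1 + c * (a ⬝ᵥ S⁻¹ *ᵥ a))
    (hα : 0 < 1 + (1 - α) * c * (a ⬝ᵥ S⁻¹ *ᵥ a)) :
    renyiDiv α (multivariateGaussian μ (S + c • vecMulVec a a)) (multivariateGaussian μ S) =
      (2 * (α - 1))⁻¹ * ((1 - α) * Real.log (1 + c * (a ⬝ᵥ S⁻¹ *ᵥ a)) -
        Real.log (1 + (1 - α) * c * (a ⬝ᵥ S⁻¹ *ᵥ a))) := by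
  have hT := posDef_add_smul_vecMulVec hS a h
  have hadd : S + c • vecMulVec a a + -c • vecMulVec a a = S := by simp [add_assoc]
  have hlin := one_add_mul_neg_mul_dotProduct_inv_mulVec hS a α h
  have hdiv := renyiDiv_multivariateGaussian_add_smul_vecMulVec μ hT a (α := α)
    (one_add_neg_mul_dotProduct_inv_mulVec_pos hS a h) (by rw [hlin]; positivity)
  rw [hadd, hlin, one_add_neg_mul_dotProduct_inv_mulVec hS a h, Real.log_div hα.ne' h.ne',
    Real.log_inv] at hdiv
  rw [hdiv]
  ring

end MultivariateGaussian

section PrivacyCurve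

lemma mul_log_one_sub_sub_log_one_sub_mul_le {α s t : ℝ} (hα : 1 ≤ α) (hs : 0 ≤ s) (hst : s ≤ t)
    (ht : α * t < 1) :
    α * Real.log (1 - s) - Real.log (1 - α * s) ≤ α * Real.log (1 - t) - Real.log (1 - α * t) := by
  have hseries {u : ℝ} (hu : 0 ≤ u) (hαu : α * u < 1) :
      HasSum (fun n : ℕ ↦ (α ^ (n + 1) - α) * (u ^ (n + 1) / (n + 1)))
        (α * Real.log (1 - u) - Real.log (1 - α * u)) := by
    have hu1 : |u| < 1 := by rw [abs_of_nonneg hu]; nlinarith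
    have hαu1 : |α * u| < 1 := by rwa [abs_of_nonneg (by positivity)]
    convert! (Real.hasSum_pow_div_log_of_abs_lt_one hαu1).sub
      ((Real.hasSum_pow_div_log_of_abs_lt_one hu1).mul_left α) using 1
    · ext n
      ring
    · ring
  refine hasSum_le (fun n ↦ ?_) (hseries hs (by nlinarith)) (hseries (hs.trans hst) ht)
  have hcoeff : α ≤ α ^ (n + 1) := le_self_pow₀ hα n.succ_ne_zero
  gcongr

lemma mul_log_one_add_sub_log_one_sub_le {c x : ℝ} (hc : 1 ≤ c) (hx : 0 ≤ x) (hcx : c * x < 1) :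
    c * (Real.log (1 + x) - Real.log (1 - x)) ≤ Real.log (1 + c * x) - Real.log (1 - c * x) := by
  have hx1 : |x| < 1 := by rw [abs_of_nonneg hx]; nlinarith
  have hcx1 : |c * x| < 1 := by rwa [abs_of_nonneg (by positivity)]
  refine hasSum_le (fun n ↦ ?_) ((Real.hasSum_log_sub_log_of_abs_lt_one hx1).mul_left c)
    (Real.hasSum_log_sub_log_of_abs_lt_one hcx1)
  have hcoeff : c ≤ c ^ (2 * n + 1) := le_self_pow₀ hc (by simp)
  calc c * (2 * (1 / (2 * n + 1)) * x ^ (2 * n + 1))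
    _ = c * x ^ (2 * n + 1) * (2 * (1 / (2 * n + 1))) := by ring
    _ ≤ c ^ (2 * n + 1) * x ^ (2 * n + 1) * (2 * (1 / (2 * n + 1))) := by gcongr
    _ = 2 * (1 / (2 * n + 1)) * (c * x) ^ (2 * n + 1) := by ring

lemma one_sub_mul_log_sub_log_le {α s : ℝ} (hα : 1 ≤ α) (hs : 0 ≤ s) (hαs : α * s < 1) :
    (1 - α) * Real.log (1 - s) - Real.log (1 + (α - 1) * s) ≤
      α * Real.log (1 - s) - Real.log (1 - α * s) := by
  have hs1 : s < 1 := by nlinarith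
  have h2 : 0 < 2 - s := by linarith
  -- `x = s / (2 - s)` is the solution of `(1 - x) / (1 + x) = 1 - s`
  have key := mul_log_one_add_sub_log_one_sub_le (c := 2 * α - 1) (x := s / (2 - s))
    (by linarith) (by positivity) (by rw [← mul_div_assoc, div_lt_one h2]; nlinarith)
  have hx : Real.log (1 + s / (2 - s)) - Real.log (1 - s / (2 - s)) = -Real.log (1 - s) := by
    have hadd : 1 + s / (2 - s) = 2 / (2 - s) := by field_simp; ring
    have hsub : 1 - s / (2 - s) = 2 / (2 - s) * (1 - s) := by field_simp; ring
    rw [hadd, hsub, Real.log_mul (by positivity) (by linarith)]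
    ring
  have hcx : Real.log (1 + (2 * α - 1) * (s / (2 - s))) -
      Real.log (1 - (2 * α - 1) * (s / (2 - s))) =
      Real.log (1 + (α - 1) * s) - Real.log (1 - α * s) := by
    have hadd : 1 + (2 * α - 1) * (s / (2 - s)) = 2 / (2 - s) * (1 + (α - 1) * s) := by
      field_simp; ring
    have hsub : 1 - (2 * α - 1) * (s / (2 - s)) = 2 / (2 - s) * (1 - α * s) := by
      field_simp; ring
    rw [hadd, hsub, Real.log_mul (by positivity) (by nlinarith),
      Real.log_mul (by positivity) (by linarith)]
    ring
  rw [hx, hcx] at key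
  linarith

-- At `s = 0` both sides are `0` by the convention `0⁻¹ = 0`; this is the value of `φ` at `ζ = ∞`.
lemma phi_inv (α k s : ℝ) :
    phi α k s⁻¹ = k * ((2 * (α - 1))⁻¹ * (α * Real.log (1 - s) - Real.log (1 - α * s))) := by
  rw [phi, one_div, inv_inv, div_inv_eq_mul]
  ring

lemma phi_inv_le_phi_inv {α k s t : ℝ} (hα : 1 < α) (hk : 0 ≤ k) (hs : 0 ≤ s) (hst : s ≤ t)
    (ht : α * t < 1) : phi α k s⁻¹ ≤ phi α k t⁻¹ := by
  rw [phi_inv, phi_inv]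
  have hα' : 0 ≤ (2 * (α - 1))⁻¹ := inv_nonneg.mpr (by linarith)
  exact mul_le_mul_of_nonneg_left (mul_le_mul_of_nonneg_left
    (mul_log_one_sub_sub_log_one_sub_mul_le hα.le hs hst ht) hα') hk

end PrivacyCurve

section GaussianMixing

lemma map_vecMul_pi_gaussianReal {ι κ : Type*} [Fintype ι] [Fintype κ] [DecidableEq ι]
    (B : Matrix κ ι ℝ) :
    (Measure.pi fun _ : κ ↦ gaussianReal 0 1).map (fun x ↦ WithLp.toLp 2 (x ᵥ* B)) =
      multivariateGaussian 0 (Bᵀ * B) := by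
  classical
  let T : EuclideanSpace ℝ κ →L[ℝ] EuclideanSpace ℝ ι := (toLpLin 2 2 Bᵀ).toContinuousLinearMap
  have hcomp : (fun x ↦ WithLp.toLp 2 (x ᵥ* B)) = T ∘ WithLp.toLp 2 := by
    ext x : 1
    simp [T, toLpLin_apply, mulVec_transpose]
  have hT : (toLpLin 2 2 B).toContinuousLinearMap = T.adjoint := by
    rw [ContinuousLinearMap.eq_adjoint_iff]
    intro x y
    simp [T, toLpLin_apply, EuclideanSpace.inner_eq_star_dotProduct, dotProduct_mulVec,
      mulVec_transpose, dotProduct_comm]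
  have hB : (Bᵀ * B).PosSemidef := by simpa using posSemidef_conjTranspose_mul_self B
  rw [hcomp, ← Measure.map_map (by fun_prop) (by fun_prop), map_pi_eq_stdGaussian]
  refine IsGaussian.ext ?_ ?_
  · rw [integral_id_multivariateGaussian', integral_map (by fun_prop) (by fun_prop)]
    simp [T.integral_comp_id_comm IsGaussian.integrable_id]
  · ext x y
    rw [covarianceBilin_map IsGaussian.memLp_two_id, covarianceBilin_multivariateGaussian hB,
      covarianceBilin_stdGaussian, innerSL_apply_apply, ← hT, ← mulVec_mulVec, dotProduct_mulVec,
      vecMul_transpose]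
    simp [toLpLin_apply, EuclideanSpace.inner_eq_star_dotProduct, dotProduct_comm]

/-- The covariance matrix `XᵀX + σ²I` of a row of the Gaussian mixing mechanism. -/
noncomputable def rowCov {ι κ : Type*} [Fintype κ] [DecidableEq ι] (σ : ℝ) (X : Matrix κ ι ℝ) :
    Matrix ι ι ℝ :=
  Xᵀ * X + σ ^ 2 • 1

lemma map_vecMul_add_smul_prod_pi_gaussianReal {ι κ : Type*} [Fintype ι] [Fintype κ]
    [DecidableEq ι] (σ : ℝ) (X : Matrix κ ι ℝ) :
    ((Measure.pi fun _ : κ ↦ gaussianReal 0 1).prod (Measure.pi fun _ : ι ↦ gaussianReal 0 1)).map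
        (fun p ↦ WithLp.toLp 2 (p.1 ᵥ* X + σ • p.2)) =
      multivariateGaussian 0 (rowCov σ X) := by
  have hsum := measurePreserving_sumPiEquivProdPi (fun _ : κ ⊕ ι ↦ gaussianReal 0 1)
  let B : Matrix (κ ⊕ ι) ι ℝ := fromRows X (σ • (1 : Matrix ι ι ℝ))
  have hB : Bᵀ * B = rowCov σ X := by
    simp [B, rowCov, transpose_fromRows, fromCols_mul_fromRows, sq, smul_smul]
  have hvec : (fun p : (κ → ℝ) × (ι → ℝ) ↦ WithLp.toLp 2 (p.1 ᵥ* X + σ • p.2)) ∘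
      MeasurableEquiv.sumPiEquivProdPi (fun _ : κ ⊕ ι ↦ ℝ) =
      fun x ↦ WithLp.toLp 2 (x ᵥ* B) := by
    ext x : 1
    simp only [B, vecMul_fromRows, vecMul_smul, vecMul_one]
    rfl
  rw [← hsum.map_eq, Measure.map_map (by fun_prop) hsum.measurable, hvec,
    map_vecMul_pi_gaussianReal, hB]

variable {n d : ℕ}

lemma gaussMix_eq_pi (k : ℕ) (σ : ℝ) (X : Matrix (Fin n) (Fin d) ℝ) :
    gaussMix k σ X =
      Measure.pi fun _ ↦ (multivariateGaussian 0 (rowCov σ X)).map WithLp.ofLp := by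
  have hrows := measurePreserving_arrowProdEquivProdArrow (Fin n → ℝ) (Fin d → ℝ) (Fin k)
    (fun _ ↦ Measure.pi fun _ ↦ gaussianReal 0 1) (fun _ ↦ Measure.pi fun _ ↦ gaussianReal 0 1)
  have hrow : (multivariateGaussian 0 (rowCov σ X)).map WithLp.ofLp =
      ((Measure.pi fun _ ↦ gaussianReal 0 1).prod (Measure.pi fun _ ↦ gaussianReal 0 1)).map
        (fun p j ↦ (∑ l, p.1 l * X l j) + σ * p.2 j) := by
    rw [← map_vecMul_add_smul_prod_pi_gaussianReal, Measure.map_map (by fun_prop) (by fun_prop)]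
    rfl
  have hfinite : IsFiniteMeasure ((multivariateGaussian 0 (rowCov σ X)).map WithLp.ofLp) :=
    inferInstance
  rw [gaussMix, stdGaussMat, stdGaussMat, ← hrows.map_eq,
    Measure.map_map (by fun_prop) hrows.measurable]
  simp only [hrow] at hfinite ⊢
  rw [← Measure.pi_map_pi (fun _ ↦ by fun_prop)]
  rfl

end GaussianMixing

section GaussianMixingBound

variable {n d : ℕ}

lemma renyiDiv_gaussMix {m : ℕ} (α σ : ℝ) (k : ℕ) {X : Matrix (Fin n) (Fin d) ℝ}
    {Y : Matrix (Fin m) (Fin d) ℝ}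
    (h : multivariateGaussian 0 (rowCov σ X) ≪ multivariateGaussian 0 (rowCov σ Y)) :
    renyiDiv α (gaussMix k σ X) (gaussMix k σ Y) =
      k * renyiDiv α (multivariateGaussian 0 (rowCov σ X))
        (multivariateGaussian 0 (rowCov σ Y)) := by
  have hofLp : MeasurableEmbedding (WithLp.ofLp : EuclideanSpace ℝ (Fin d) → Fin d → ℝ) :=
    (MeasurableEquiv.toLp 2 (Fin d → ℝ)).symm.measurableEmbedding
  have hprob {l : ℕ} (Z : Matrix (Fin l) (Fin d) ℝ) :
      IsProbabilityMeasure ((multivariateGaussian 0 (rowCov σ Z)).map WithLp.ofLp) :=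
    Measure.isProbabilityMeasure_map (by fun_prop)
  rw [gaussMix_eq_pi, gaussMix_eq_pi, renyiDiv_pi_const α (h.map hofLp.measurable),
    renyiDiv_map hofLp, Fintype.card_fin]

/-- The `σ²`-ridge leverage score of the `i`-th row of `X`. -/
noncomputable def leverage {ι κ : Type*} [Fintype ι] [Fintype κ] [DecidableEq ι] (σ : ℝ)
    (X : Matrix κ ι ℝ) (i : κ) : ℝ :=
  X i ⬝ᵥ (rowCov σ X)⁻¹ *ᵥ X i

lemma leverage_nonneg {ι κ : Type*} [Fintype ι] [Fintype κ] [DecidableEq ι] {σ : ℝ}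
    {X : Matrix κ ι ℝ} (hX : (rowCov σ X).PosDef) (i : κ) : 0 ≤ leverage σ X i :=
  dotProduct_inv_mulVec_nonneg hX (X i)

lemma rowCov_updateRow_zero {ι κ : Type*} [Fintype κ] [DecidableEq ι] [DecidableEq κ] (σ : ℝ)
    (X : Matrix κ ι ℝ) (i : κ) :
    rowCov σ (X.updateRow i 0) = rowCov σ X + (-1 : ℝ) • vecMulVec (X i) (X i) := by
  have hgram : (X.updateRow i 0)ᵀ * X.updateRow i 0 = Xᵀ * X - vecMulVec (X i) (X i) := by
    ext j l
    have hterm (m : κ) : X.updateRow i 0 m j * X.updateRow i 0 m l =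
        X m j * X m l - if m = i then X i j * X i l else 0 := by
      rcases eq_or_ne m i with rfl | hm <;> simp [*]
    simp [mul_apply, vecMulVec_apply, hterm]
  rw [rowCov, rowCov, hgram, neg_one_smul]
  abel

lemma posSemidef_sub_smul_one_of_le_lamMin {A : Matrix (Fin d) (Fin d) ℝ} (hA : A.IsHermitian)
    {c : ℝ} (hc : c ≤ lamMin A) : (A - c • 1).PosSemidef := by
  rw [lamMin, dif_pos hA] at hc
  open scoped MatrixOrder in
  rw [← Matrix.le_iff, ← Algebra.algebraMap_eq_smul_one, algebraMap_le_iff_le_spectrum,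
    hA.spectrum_real_eq_range_eigenvalues]
  rintro _ ⟨i, rfl⟩
  exact hc.trans (ciInf_le (Set.finite_range _).bddBelow i)

lemma posSemidef_rowCov_sub_smul_one {κ : Type*} [Fintype κ] (σ : ℝ) {X : Matrix κ (Fin d) ℝ}
    {c : ℝ} (hc : c ≤ lamMin (Xᵀ * X)) : (rowCov σ X - (σ ^ 2 + c) • 1).PosSemidef := by
  have hsub : rowCov σ X - (σ ^ 2 + c) • 1 = Xᵀ * X - c • 1 := by
    rw [rowCov, add_smul, add_comm (Xᵀ * X), add_sub_add_left_eq_sub]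
  rw [hsub]
  have hherm : (Xᵀ * X).IsHermitian := by simpa using isHermitian_conjTranspose_mul_self X
  exact posSemidef_sub_smul_one_of_le_lamMin hherm hc

lemma renyiDiv_gaussMix_updateRow_zero {α σ : ℝ} (k : ℕ) {X : Matrix (Fin n) (Fin d) ℝ}
    (hX : (rowCov σ X).PosDef) {i : Fin n} (h : leverage σ X i < 1)
    (hα : α * leverage σ X i < 1) :
    renyiDiv α (gaussMix k σ X) (gaussMix k σ (X.updateRow i 0)) =
      phi α k (leverage σ X i)⁻¹ := by
  unfold leverage at h hα ⊢
  have hpos : 0 < 1 + -1 * (X i ⬝ᵥ (rowCov σ X)⁻¹ *ᵥ X i) := by linarith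
  have hac := absolutelyContinuous_multivariateGaussian_add_smul_vecMulVec 0 hX (X i) hpos
  rw [← rowCov_updateRow_zero] at hac
  rw [renyiDiv_gaussMix α σ k hac, rowCov_updateRow_zero,
    renyiDiv_multivariateGaussian_add_smul_vecMulVec 0 hX (X i) hpos (by linarith), phi_inv,
    mul_neg_one, neg_one_mul, neg_mul, ← sub_eq_add_neg, ← sub_eq_add_neg]

lemma renyiDiv_updateRow_zero_gaussMix_le {α σ : ℝ} (k : ℕ) {X : Matrix (Fin n) (Fin d) ℝ}
    (hX : (rowCov σ X).PosDef) {i : Fin n} (hα1 : 1 < α) (hα : α * leverage σ X i < 1) :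
    renyiDiv α (gaussMix k σ (X.updateRow i 0)) (gaussMix k σ X) ≤
      phi α k (leverage σ X i)⁻¹ := by
  have hs := leverage_nonneg hX i
  unfold leverage at hs hα ⊢
  have hpos : 0 < 1 + -1 * (X i ⬝ᵥ (rowCov σ X)⁻¹ *ᵥ X i) := by nlinarith
  have hpos' : 0 < 1 + (1 - α) * -1 * (X i ⬝ᵥ (rowCov σ X)⁻¹ *ᵥ X i) := by nlinarith
  have hac := absolutelyContinuous_multivariateGaussian_add_smul_vecMulVec_left 0 hX (X i) hpos
  rw [← rowCov_updateRow_zero] at hac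
  rw [renyiDiv_gaussMix α σ k hac, rowCov_updateRow_zero,
    renyiDiv_multivariateGaussian_add_smul_vecMulVec_left 0 hX (X i) hpos hpos', phi_inv,
    mul_neg_one, neg_one_mul, neg_sub, ← sub_eq_add_neg]
  have hα' : 0 ≤ (2 * (α - 1))⁻¹ := inv_nonneg.mpr (by linarith)
  exact mul_le_mul_of_nonneg_left (mul_le_mul_of_nonneg_left
    (one_sub_mul_log_sub_log_le hα1.le hs hα) hα') k.cast_nonneg

end GaussianMixingBound

theorem gaussMix_renyiDiv_le_phi_general {n d : ℕ} (X : Matrix (Fin n) (Fin d) ℝ)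
    (CX lamBar σ γ : ℝ) (k : ℕ) (i : Fin n)
    (hrow : Real.sqrt (∑ j, X i j ^ 2) ≤ CX)
    (hlam : lamBar ≤ lamMin (Xᵀ * X))
    (hγ : γ = (σ ^ 2 + lamBar) / CX ^ 2)
    (α : ℝ) (hα : α ∈ Set.Ioo 1 γ) :
    renyiDiv α (gaussMix k σ X) (gaussMix k σ (X.updateRow i 0)) ≤ phi α k γ ∧
      renyiDiv α (gaussMix k σ (X.updateRow i 0)) (gaussMix k σ X) ≤ phi α k γ := by
  obtain ⟨hα1, hαγ⟩ := hα
  have hγ0 : 0 < γ := by linarith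
  have hc : 0 < σ ^ 2 + lamBar := by
    rw [hγ] at hγ0
    by_contra! hneg
    exact hγ0.not_ge (div_nonpos_of_nonpos_of_nonneg hneg (sq_nonneg CX))
  have hcov := posSemidef_rowCov_sub_smul_one σ hlam
  have hcovpos : (rowCov σ X).PosDef := posDef_of_posSemidef_sub_smul_one hc hcov
  have hlev : leverage σ X i ≤ γ⁻¹ := by
    have hnorm : X i ⬝ᵥ X i ≤ CX ^ 2 := by
      simpa [dotProduct, sq] using (Real.sqrt_le_left ((Real.sqrt_nonneg _).trans hrow)).mp hrow
    rw [hγ, inv_div]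
    exact (dotProduct_inv_mulVec_le hc hcov (X i)).trans (by gcongr)
  have hαγ' : α * γ⁻¹ < 1 := by rwa [← div_eq_mul_inv, div_lt_one hγ0]
  have hαlev : α * leverage σ X i < 1 := lt_of_le_of_lt (by gcongr) hαγ'
  have hmono : phi α k (leverage σ X i)⁻¹ ≤ phi α k γ := by
    simpa using phi_inv_le_phi_inv hα1 k.cast_nonneg (leverage_nonneg hcovpos i) hlev hαγ'
  refine ⟨?_, (renyiDiv_updateRow_zero_gaussMix_le k hcovpos hα1 hαlev).trans hmono⟩
  have hlev1 : leverage σ X i < 1 := hlev.trans_lt (inv_lt_one_of_one_lt₀ (hα1.trans hαγ))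
  exact (renyiDiv_gaussMix_updateRow_zero k hcovpos hlev1 hαlev).trans_le hmono

/-- the Rényi-DP bound for the Gaussian mixing mechanism. -/
theorem gaussMix_renyiDiv_le_phi {n d : ℕ} (X : Matrix (Fin n) (Fin d) ℝ)
    (CX lamBar σ γ : ℝ) (k : ℕ) (hk : 1 ≤ k)
    (hCX : 0 < CX)
    (hrow : ∀ i, Real.sqrt (∑ j, X i j ^ 2) ≤ CX)
    (hlamBar : 0 ≤ lamBar)
    (hlam : lamBar ≤ lamMin (Xᵀ * X))
    (hσ : 0 < σ)
    (hγ : γ = (σ ^ 2 + lamBar) / CX ^ 2)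
    (hγ1 : 1 < γ)
    (i : Fin n) (X' : Matrix (Fin n) (Fin d) ℝ) (hX' : X' = X.updateRow i 0)
    (α : ℝ) (hα : α ∈ Set.Ioo 1 γ) :
    renyiDiv α (gaussMix k σ X) (gaussMix k σ X') ≤ phi α k γ ∧
      renyiDiv α (gaussMix k σ X') (gaussMix k σ X) ≤ phi α k γ := by
  subst hX'
  exact gaussMix_renyiDiv_le_phi_general X CX lamBar σ γ k i (hrow i) hlam hγ α hα
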